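/- Let h ∈ ℝ[x₁,…,x_n], κ_h > 0, β⁻ < 0. Then the CBF derivative condition — for every x with h(x) > β⁻ there exists u ∈ 𝒰 with ḣ(x,u) > −κ_h h(x) — holds if and only if there exist a natural number k_h and polynomials q_h, r_h in preorder(−ḣ(x,u¹)−κ_h h, …, −ḣ(x,uᵐ)−κ_h h) such that q_h(x)·(β⁻−h(x)) = (β⁻−h(x))^{2k_h} + r_h(x) as polynomials. -/

import Mathlib

open MvPolynomial Finset

/-- A polynomial is a sum of squares. -/
def IsSOS {n : ℕ} (p : MvPolynomial (Fin n) ℝ) : Prop :=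
  ∃ (N : ℕ) (q : Fin N → MvPolynomial (Fin n) ℝ), p = ∑ i, (q i) ^ 2

/-- Membership in the preorder generated by `b₁, …, bₘ`. -/
def InPreorder {n m : ℕ} (b : Fin m → MvPolynomial (Fin n) ℝ)
    (p : MvPolynomial (Fin n) ℝ) : Prop :=
  ∃ σ : Finset (Fin m) → MvPolynomial (Fin n) ℝ,
    (∀ J, IsSOS (σ J)) ∧ p = ∑ J : Finset (Fin m), σ J * ∏ i ∈ J, b i

/-- `ḣ(x,u) = ∇h(x)ᵀ(f(x) + g(x)u)` as a polynomial in `x`, for a fixed input vector `u`. -/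
noncomputable def HdotPoly {n nu : ℕ} (h : MvPolynomial (Fin n) ℝ)
    (f : Fin n → MvPolynomial (Fin n) ℝ) (g : Fin n → Fin nu → MvPolynomial (Fin n) ℝ)
    (u : Fin nu → ℝ) : MvPolynomial (Fin n) ℝ :=
  ∑ i, pderiv i h * (f i + ∑ j, C (u j) * g i j)

/-- `ḣ(x,u)` evaluated at the state `x`. -/
noncomputable def HdotFun {n nu : ℕ} (h : MvPolynomial (Fin n) ℝ)
    (f : Fin n → MvPolynomial (Fin n) ℝ) (g : Fin n → Fin nu → MvPolynomial (Fin n) ℝ)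
    (x : Fin n → ℝ) (u : Fin nu → ℝ) : ℝ :=
  eval x (HdotPoly h f g u)

/-- An ordered field whose polynomials satisfy the intermediate value property. -/
def PolyIVT (L : Type*) [Field L] [LinearOrder L] : Prop :=
  ∀ (f : Polynomial L) (a b : L), a < b → f.eval a * f.eval b < 0 →
    ∃ c, a < c ∧ c < b ∧ f.eval c = 0

theorem polyIVT_real : PolyIVT ℝ := by
  intro f a b hab hf
  have hcont : ContinuousOn (fun x => f.eval x) (Set.Icc a b) := f.continuous.continuousOn
  rcases mul_neg_iff.mp hf with ⟨ha, hb⟩ | ⟨ha, hb⟩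
  · obtain ⟨c, hc, hc0⟩ := intermediate_value_Ioo' hab.le hcont ⟨hb, ha⟩
    exact ⟨c, hc.1, hc.2, hc0⟩
  · obtain ⟨c, hc, hc0⟩ := intermediate_value_Ioo hab.le hcont ⟨ha, hb⟩
    exact ⟨c, hc.1, hc.2, hc0⟩

/-- Writes a nonzero polynomial as a power of `X - a` times a polynomial not vanishing at `a`. -/
theorem Polynomial.exists_eq_X_sub_C_pow_mul {L : Type*} [Field L] {f : Polynomial L} (hf : f ≠ 0) {a : L}
    (ha : f.eval a = 0) : ∃ (k : ℕ) (q : Polynomial L),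
      f = (Polynomial.X - Polynomial.C a) ^ (k + 1) * q ∧ q.eval a ≠ 0 := by
  obtain ⟨q, hq, hdvd⟩ := Polynomial.exists_eq_pow_rootMultiplicity_mul_and_not_dvd f hf a
  have hpos : 0 < f.rootMultiplicity a := (Polynomial.rootMultiplicity_pos hf).mpr ha
  refine ⟨f.rootMultiplicity a - 1, q, ?_, fun h => hdvd (Polynomial.dvd_iff_isRoot.mpr h)⟩
  rwa [Nat.sub_add_cancel hpos]

section RealClosed

variable {L : Type*} [Field L] [LinearOrder L] [IsStrictOrderedRing L]

theorem PolyIVT.eval_mul_eval_pos (hL : PolyIVT L) {f : Polynomial L} {a b : L} (hab : a ≤ b)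
    (hf : ∀ x, a ≤ x → x ≤ b → f.eval x ≠ 0) : 0 < f.eval a * f.eval b := by
  rcases hab.eq_or_lt with rfl | hab
  · exact mul_self_pos.mpr (hf a le_rfl le_rfl)
  · by_contra hneg
    have hne : f.eval a * f.eval b ≠ 0 :=
      mul_ne_zero (hf a le_rfl hab.le) (hf b hab.le le_rfl)
    obtain ⟨c, hac, hcb, hc⟩ := hL f a b hab (lt_of_le_of_ne (not_lt.mp hneg) hne)
    exact hf c hac.le hcb.le hc

theorem PolyIVT.rolle_of_consecutive (hL : PolyIVT L) {f : Polynomial L} (hf : f ≠ 0) {a b : L}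
    (hab : a < b) (ha : f.eval a = 0) (hb : f.eval b = 0)
    (hcons : ∀ x, a < x → x < b → f.eval x ≠ 0) :
    ∃ c, a < c ∧ c < b ∧ f.derivative.eval c = 0 := by
  obtain ⟨k, q, hq, hqa⟩ := Polynomial.exists_eq_X_sub_C_pow_mul hf ha
  have hq0 : q ≠ 0 := by rintro rfl; simp at hqa
  have hqb : q.eval b = 0 := by
    rw [hq] at hb
    simpa [sub_ne_zero.mpr hab.ne'] using hb
  obtain ⟨l, r, hr, hrb⟩ := Polynomial.exists_eq_X_sub_C_pow_mul hq0 hqb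
  have hra : r.eval a ≠ 0 := fun h => hqa (by rw [hr]; simp [h])
  have hpos : 0 < r.eval a * r.eval b := by
    refine hL.eval_mul_eval_pos hab.le fun x hax hxb h0 => ?_
    rcases hax.eq_or_lt with rfl | hax
    · exact hra h0
    rcases hxb.eq_or_lt with rfl | hxb
    · exact hrb h0
    exact hcons x hax hxb (by rw [hq, hr]; simp [h0])
  set A : Polynomial L := Polynomial.X - Polynomial.C a with hA
  set B : Polynomial L := Polynomial.X - Polynomial.C b with hB
  set s : Polynomial L := Polynomial.C ((k : L) + 1) * B * r + Polynomial.C ((l : L) + 1) * A * r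
    + A * B * r.derivative with hs
  have hder : f.derivative = A ^ k * B ^ l * s := by
    rw [hq, hr, hs]
    simp only [Polynomial.derivative_mul, Polynomial.derivative_pow, hA, hB,
      Polynomial.derivative_sub, Polynomial.derivative_X, Polynomial.derivative_C]
    simp
    ring
  have hsa : s.eval a = ((k : L) + 1) * (a - b) * r.eval a := by simp [hs, hA, hB]
  have hsb : s.eval b = ((l : L) + 1) * (b - a) * r.eval b := by simp [hs, hA, hB]
  obtain ⟨c, hac, hcb, hc⟩ := hL s a b hab (by
    rw [hsa, hsb]
    have h1 : 0 < ((k : L) + 1) * (b - a) * (((l : L) + 1) * (b - a)) := by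
      have := sub_pos.mpr hab
      positivity
    nlinarith [mul_pos h1 hpos])
  exact ⟨c, hac, hcb, by rw [hder]; simp [hc]⟩

theorem PolyIVT.rolle (hL : PolyIVT L) {f : Polynomial L} {a b : L} (hab : a < b)
    (ha : f.eval a = 0) (hb : f.eval b = 0) :
    ∃ c, a < c ∧ c < b ∧ f.derivative.eval c = 0 := by
  rcases eq_or_ne f 0 with rfl | hf
  · obtain ⟨c, h1, h2⟩ := exists_between hab
    exact ⟨c, h1, h2, by simp⟩
  obtain ⟨m, hm, hmin⟩ := (f.roots.toFinset.filter (a < ·)).exists_min_image id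
    ⟨b, by simpa [hf, hab] using hb⟩
  simp only [Finset.mem_filter, Multiset.mem_toFinset, Polynomial.mem_roots hf,
    Polynomial.IsRoot, id] at hm hmin
  obtain ⟨c, h1, h2, h3⟩ := hL.rolle_of_consecutive hf hm.2 ha hm.1
    fun x hax hxm h0 => (hmin x ⟨h0, hax⟩).not_gt hxm
  exact ⟨c, h1, h2.trans_le (hmin b ⟨hb, hab⟩), h3⟩

/-- On an interval where the derivative does not vanish, the sign of `f` at `x` tells on which side
of its root `c` the point `x` lies. -/
theorem PolyIVT.sign_eq_of_derivative_ne_zero (hL : PolyIVT L) {f : Polynomial L} {a b c : L}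
    (hac : a < c) (hcb : c < b) (hc : f.eval c = 0)
    (hf : ∀ x, a < x → x < b → f.derivative.eval x ≠ 0) {x : L} (hax : a ≤ x) (hxb : x ≤ b) :
    ∃ ε, 0 < ε ∧ f.eval x * f.eval b = (x - c) * ε := by
  obtain ⟨q, rfl⟩ := Polynomial.dvd_iff_isRoot.mpr hc
  have hroot : ∀ y, a ≤ y → y ≤ b → q.eval y ≠ 0 := by
    intro y hay hyb h0
    rcases lt_trichotomy y c with h | rfl | h
    · obtain ⟨z, h1, h2, h3⟩ := hL.rolle h (f := (Polynomial.X - Polynomial.C c) * q)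
        (by simp [h0]) (by simp)
      exact hf z (hay.trans_lt h1) (h2.trans hcb) h3
    · exact hf y hac hcb (by simp [h0])
    · obtain ⟨z, h1, h2, h3⟩ := hL.rolle h (f := (Polynomial.X - Polynomial.C c) * q)
        (by simp) (by simp [h0])
      exact hf z (hac.trans h1) (h2.trans_le hyb) h3
  have hpos : 0 < q.eval x * q.eval b :=
    hL.eval_mul_eval_pos hxb fun y hy hyb => hroot y (hax.trans hy) hyb
  refine ⟨(b - c) * (q.eval x * q.eval b), mul_pos (sub_pos.mpr hcb) hpos, ?_⟩
  simp
  ring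

end RealClosed

section CommonSubfield

variable {M L U : Type*} [Field M] [LinearOrder M] [IsStrictOrderedRing M]
  [Field L] [LinearOrder L] [IsStrictOrderedRing L]
  [Field U] [LinearOrder U] [IsStrictOrderedRing U]

theorem exists_le_abs_eval₂ {i : M →+* L} (hi : StrictMono i) (f : Polynomial M) (hf : f ≠ 0) :
    ∃ B ε : M, 0 < ε ∧ ∀ z : L, i B ≤ |z| → i ε ≤ |f.eval₂ i z| := by
  induction hd : f.natDegree generalizing f with
  | zero =>
    rw [Polynomial.eq_C_of_natDegree_eq_zero hd] at hf ⊢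
    have h0 : f.coeff 0 ≠ 0 := by simpa using hf
    refine ⟨0, |f.coeff 0|, abs_pos.mpr h0, fun z _ => ?_⟩
    rw [Polynomial.eval₂_C]
    rcases abs_cases (f.coeff 0) with ⟨h, _⟩ | ⟨h, _⟩
    · rw [h]; exact le_abs_self _
    · rw [h, map_neg]; exact neg_le_abs _
  | succ d ih =>
    have hdiv : f.divX.natDegree = d := by rw [Polynomial.natDegree_divX_eq_natDegree_tsub_one]; omega
    have hne : f.divX ≠ 0 := by
      intro h
      rw [Polynomial.divX_eq_zero_iff] at h
      rw [h] at hd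
      simp at hd
    obtain ⟨B, ε, hε, hB⟩ := ih f.divX hne hdiv
    refine ⟨max B ((1 + |f.coeff 0|) / ε), 1, one_pos, fun z hz => ?_⟩
    rw [hi.monotone.map_max, max_le_iff, map_div₀, div_le_iff₀ (by simpa using hi hε)] at hz
    have h1 := hB z hz.1
    have hε' : 0 < i ε := by simpa using hi hε
    have hc : |i (f.coeff 0)| ≤ i |f.coeff 0| := by
      rw [abs_le, ← map_neg, hi.le_iff_le, hi.le_iff_le]
      exact abs_le.mp le_rfl
    have heq : f.eval₂ i z = f.divX.eval₂ i z * z + i (f.coeff 0) := by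
      conv_lhs => rw [← Polynomial.divX_mul_X_add f]
      simp
    have h2 : |z| * i ε ≤ |f.divX.eval₂ i z * z| := by
      rw [abs_mul, mul_comm]
      exact mul_le_mul_of_nonneg_right h1 (abs_nonneg z)
    have h3 := abs_sub_abs_le_abs_sub (f.divX.eval₂ i z * z) (-i (f.coeff 0))
    rw [abs_neg, sub_neg_eq_add, ← heq] at h3
    have h4 := hz.2
    rw [map_add, map_one] at h4
    rw [map_one]
    linarith

theorem exists_separating {i : M →+* L} (hi : StrictMono i) (Z : Finset M) (c : L) :
    ∃ e, ∀ z ∈ Z, (i z < c → z < e) ∧ (c < i z → e < z) := by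
  obtain ⟨e, he, he'⟩ := Finset.exists_between' (Z.filter (i · < c)) (Z.filter (c < i ·)) (by
    intro x hx y hy
    rw [Finset.mem_filter] at hx hy
    exact hi.lt_iff_lt.mp (hx.2.trans hy.2))
  exact ⟨e, fun z hz => ⟨fun h => he z (Finset.mem_filter.mpr ⟨hz, h⟩),
    fun h => he' z (Finset.mem_filter.mpr ⟨hz, h⟩)⟩⟩

theorem eval₂_pos_iff_of_separating (hL : PolyIVT L) {i : M →+* L} (hi : StrictMono i)
    {g : Polynomial M} (hg : ∀ y, g.eval₂ i y = 0 → ∃ m, i m = y) {c : L} (hc : ∀ m, i m ≠ c)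
    {e : M} (he : ∀ z, g.eval z = 0 → (i z < c → z < e) ∧ (c < i z → e < z)) :
    0 < g.eval₂ i c ↔ 0 < g.eval e := by
  have hroot : ∀ y, (g.map i).eval y = 0 → (y < c → y < i e) ∧ (c < y → i e < y) := by
    intro y hy
    rw [Polynomial.eval_map] at hy
    obtain ⟨m, rfl⟩ := hg y hy
    rw [Polynomial.eval₂_at_apply, map_eq_zero] at hy
    exact ⟨fun h => hi ((he m hy).1 h), fun h => hi ((he m hy).2 h)⟩
  have hne : ∀ y, (g.map i).eval y = 0 → y ≠ c := by
    rintro y hy rfl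
    rw [Polynomial.eval_map] at hy
    obtain ⟨m, hm⟩ := hg y hy
    exact hc m hm
  have hpos : 0 < (g.map i).eval c * (g.map i).eval (i e) := by
    rcases le_total c (i e) with h | h
    · refine hL.eval_mul_eval_pos h fun x hx hxe h0 => ?_
      exact ((hroot x h0).2 (lt_of_le_of_ne hx (hne x h0).symm)).not_ge hxe
    · rw [mul_comm]
      refine hL.eval_mul_eval_pos h fun x hx hxe h0 => ?_
      exact ((hroot x h0).1 (lt_of_le_of_ne hxe (hne x h0))).not_ge hx
  rw [Polynomial.eval_map, Polynomial.eval_map, Polynomial.eval₂_at_apply] at hpos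
  have hie : 0 < i (g.eval e) ↔ 0 < g.eval e := by
    rw [← hi.lt_iff_lt, map_zero]
  rw [← hie]
  exact ⟨fun h => (pos_iff_pos_of_mul_pos hpos).mp h, fun h => (pos_iff_pos_of_mul_pos hpos).mpr h⟩

/-- Two points realizing the same cut over `M` give the same sign to every polynomial over `M`
whose roots in both fields come from `M`. -/
theorem eval₂_pos_iff_of_same_cut (hL : PolyIVT L) (hU : PolyIVT U) {i : M →+* L} {j : M →+* U}
    (hi : StrictMono i) (hj : StrictMono j) {g : Polynomial M} (hg0 : g ≠ 0)
    (hgL : ∀ y, g.eval₂ i y = 0 → ∃ m, i m = y) (hgU : ∀ y, g.eval₂ j y = 0 → ∃ m, j m = y)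
    {c : L} {c' : U} (hc : ∀ m, i m ≠ c)
    (hcut : ∀ m, (i m < c ↔ j m < c') ∧ (c < i m ↔ c' < j m)) :
    0 < g.eval₂ i c ↔ 0 < g.eval₂ j c' := by
  have hc' : ∀ m, j m ≠ c' := by
    rintro m hm
    rcases lt_or_gt_of_ne (hc m) with h | h
    · exact ((hcut m).1.mp h).ne hm
    · exact ((hcut m).2.mp h).ne' hm
  obtain ⟨e, he⟩ := exists_separating hi g.roots.toFinset c
  have he' : ∀ z, g.eval z = 0 → (i z < c → z < e) ∧ (c < i z → e < z) :=
    fun z hz => he z (by simpa [hg0] using hz)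
  rw [eval₂_pos_iff_of_separating hL hi hgL hc he', eval₂_pos_iff_of_separating hU hj hgU hc'
    fun z hz => by rw [← (hcut z).1, ← (hcut z).2]; exact he' z hz]

/-- A root of minimal degree in `L` has a counterpart in `U` with the same sign behaviour. -/
theorem exists_same_sign_of_root (hL : PolyIVT L) (hU : PolyIVT U) {i : M →+* L} {j : M →+* U}
    (hi : StrictMono i) (hj : StrictMono j) {f : Polynomial M} (hf0 : f ≠ 0)
    (hfL : ∀ g : Polynomial M, g ≠ 0 → g.natDegree < f.natDegree →
      ∀ y, g.eval₂ i y = 0 → ∃ m, i m = y)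
    (hfU : ∀ g : Polynomial M, g ≠ 0 → g.natDegree < f.natDegree →
      ∀ y, g.eval₂ j y = 0 → ∃ m, j m = y)
    {c : L} (hfc : f.eval₂ i c = 0) (hc : ∀ m, i m ≠ c) :
    ∃ c' : U, ∀ g : Polynomial M, 0 < g.eval₂ i c ↔ 0 < g.eval₂ j c' := by
  have hdeg : f.natDegree ≠ 0 := by
    intro h
    rw [Polynomial.eq_C_of_natDegree_eq_zero h, Polynomial.eval₂_C, map_eq_zero] at hfc
    exact hf0 (by rw [Polynomial.eq_C_of_natDegree_eq_zero h, hfc, Polynomial.C_0])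
  have hder0 : f.derivative ≠ 0 := by
    intro h
    exact hdeg (Polynomial.derivative_eq_zero.mp h)
  have hderdeg := Polynomial.natDegree_derivative_lt hdeg
  obtain ⟨B, ε, hε, hB⟩ := exists_le_abs_eval₂ hi f hf0
  have hcB : |c| < i B := by
    by_contra h
    have := hB c (not_lt.mp h)
    rw [hfc, abs_zero, ← map_zero i, hi.le_iff_le] at this
    exact this.not_gt hε
  set Z : Finset M := insert (-B) (insert B f.derivative.roots.toFinset) with hZ
  have hZroot : ∀ z, f.derivative.eval z = 0 → z ∈ Z := fun z hz => by
    simp [hZ, hder0, Polynomial.IsRoot, hz]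
  obtain ⟨a, ha, hamax⟩ := (Z.filter (i · < c)).exists_max_image id
    ⟨-B, by simp [hZ]; linarith [(abs_lt.mp hcB).1]⟩
  obtain ⟨b, hb, hbmin⟩ := (Z.filter (c < i ·)).exists_min_image id
    ⟨B, by simp [hZ]; exact (abs_lt.mp hcB).2⟩
  simp only [Finset.mem_filter, id] at ha hb hamax hbmin
  have hgap : ∀ m, f.derivative.eval m = 0 → m ≤ a ∨ b ≤ m := fun m hm => by
    rcases lt_or_gt_of_ne (hc m) with h | h
    · exact .inl (hamax m ⟨hZroot m hm, h⟩)
    · exact .inr (hbmin m ⟨hZroot m hm, h⟩)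
  have hLder : ∀ x, i a < x → x < i b → (f.map i).derivative.eval x ≠ 0 := by
    intro x hax hxb h0
    rw [Polynomial.derivative_map, Polynomial.eval_map] at h0
    obtain ⟨m, rfl⟩ := hfL _ hder0 hderdeg x h0
    rw [Polynomial.eval₂_at_apply, map_eq_zero] at h0
    rw [hi.lt_iff_lt] at hax hxb
    rcases hgap m h0 with h | h <;> order
  have hUder : ∀ x, j a < x → x < j b → (f.map j).derivative.eval x ≠ 0 := by
    intro x hax hxb h0
    rw [Polynomial.derivative_map, Polynomial.eval_map] at h0
    obtain ⟨m, rfl⟩ := hfU _ hder0 hderdeg x h0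
    rw [Polynomial.eval₂_at_apply, map_eq_zero] at h0
    rw [hj.lt_iff_lt] at hax hxb
    rcases hgap m h0 with h | h <;> order
  have hab : a < b := hi.lt_iff_lt.mp (ha.2.trans hb.2)
  have hLsign : ∀ m, a ≤ m → m ≤ b → ∃ δ : L, 0 < δ ∧ i (f.eval m * f.eval b) = (i m - c) * δ := by
    intro m ham hmb
    have := hL.sign_eq_of_derivative_ne_zero ha.2 hb.2 (by rwa [Polynomial.eval_map]) hLder
      (hi.monotone ham) (hi.monotone hmb)
    simpa [Polynomial.eval_map, Polynomial.eval₂_at_apply] using this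
  have hfab : f.eval a * f.eval b < 0 := by
    obtain ⟨δ, hδ, h⟩ := hLsign a le_rfl hab.le
    rw [← hi.lt_iff_lt, h, map_zero]
    exact mul_neg_of_neg_of_pos (sub_neg.mpr ha.2) hδ
  obtain ⟨c', hac', hcb', hfc'⟩ := hU (f.map j) (j a) (j b) (hj hab) (by
    rw [Polynomial.eval_map, Polynomial.eval_map, Polynomial.eval₂_at_apply,
      Polynomial.eval₂_at_apply, ← map_mul, ← map_zero j]
    exact hj hfab)
  have hUsign : ∀ m, a ≤ m → m ≤ b →
      ∃ δ : U, 0 < δ ∧ j (f.eval m * f.eval b) = (j m - c') * δ := by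
    intro m ham hmb
    have := hU.sign_eq_of_derivative_ne_zero hac' hcb' hfc' hUder
      (hj.monotone ham) (hj.monotone hmb)
    simpa [Polynomial.eval_map, Polynomial.eval₂_at_apply] using this
  have hcut : ∀ m, (i m < c ↔ j m < c') ∧ (c < i m ↔ c' < j m) := by
    intro m
    rcases lt_or_ge m a with hma | ham
    · have h1 := (hi hma).trans ha.2
      have h2 := (hj hma).trans hac'
      exact ⟨iff_of_true h1 h2, iff_of_false h1.not_gt h2.not_gt⟩
    rcases lt_or_ge b m with hbm | hmb
    · have h1 := hb.2.trans (hi hbm)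
      have h2 := hcb'.trans (hj hbm)
      exact ⟨iff_of_false h1.not_gt h2.not_gt, iff_of_true h1 h2⟩
    obtain ⟨δ, hδ, h1⟩ := hLsign m ham hmb
    obtain ⟨δ', hδ', h2⟩ := hUsign m ham hmb
    constructor
    · have h1' : i (-(f.eval m * f.eval b)) = (c - i m) * δ := by rw [map_neg, h1]; ring
      have h2' : j (-(f.eval m * f.eval b)) = (c' - j m) * δ' := by rw [map_neg, h2]; ring
      rw [← sub_pos, ← mul_pos_iff_of_pos_right hδ, ← h1', ← map_zero i, hi.lt_iff_lt,
        ← hj.lt_iff_lt, h2', map_zero, mul_pos_iff_of_pos_right hδ', sub_pos]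
    · rw [← sub_pos, ← mul_pos_iff_of_pos_right hδ, ← h1, ← map_zero i, hi.lt_iff_lt,
        ← hj.lt_iff_lt, h2, map_zero, mul_pos_iff_of_pos_right hδ', sub_pos]
  rw [Polynomial.eval_map] at hfc'
  refine ⟨c', fun g => ?_⟩
  have hdiv : g = f * (g / f) + g % f := (EuclideanDomain.div_add_mod g f).symm
  have hgL : g.eval₂ i c = (g % f).eval₂ i c := by
    conv_lhs => rw [hdiv]
    rw [Polynomial.eval₂_add, Polynomial.eval₂_mul, hfc, zero_mul, zero_add]
  have hgU : g.eval₂ j c' = (g % f).eval₂ j c' := by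
    conv_lhs => rw [hdiv]
    rw [Polynomial.eval₂_add, Polynomial.eval₂_mul, hfc', zero_mul, zero_add]
  rw [hgL, hgU]
  rcases eq_or_ne (g % f) 0 with h0 | h0
  · simp [h0]
  have hlt := Polynomial.natDegree_mod_lt g hdeg
  exact eval₂_pos_iff_of_same_cut hL hU hi hj h0 (hfL _ h0 hlt) (hfU _ h0 hlt) hc hcut

end CommonSubfield

section PartialIsomorphism

variable {L U : Type*} [Field L] [Field U]

theorem fst_eval₂_prod {M : Type*} [CommRing M] (i : M →+* L) (j : M →+* U) (c : L) (c' : U)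
    (g : Polynomial M) : (g.eval₂ (i.prod j) (c, c')).1 = g.eval₂ i c := by
  have := Polynomial.hom_eval₂ g (i.prod j) (RingHom.fst L U) (c, c')
  rwa [RingHom.fst_comp_prod] at this

theorem snd_eval₂_prod {M : Type*} [CommRing M] (i : M →+* L) (j : M →+* U) (c : L) (c' : U)
    (g : Polynomial M) : (g.eval₂ (i.prod j) (c, c')).2 = g.eval₂ j c' := by
  have := Polynomial.hom_eval₂ g (i.prod j) (RingHom.snd L U) (c, c')
  rwa [RingHom.snd_comp_prod] at this

variable [LinearOrder L] [LinearOrder U]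

/-- A subring of `L × U` that is the graph of an order isomorphism between subrings. -/
def SignCompatible (S : Subring (L × U)) : Prop :=
  ∀ s ∈ S, 0 < s.1 ↔ 0 < s.2

theorem SignCompatible.exists_le_maximal {S : Subring (L × U)} (hS : SignCompatible S) :
    ∃ S', S ≤ S' ∧ Maximal SignCompatible S' := by
  refine zorn_le_nonempty₀ {S : Subring (L × U) | SignCompatible S} ?_ S hS
  intro c hc hchain y hy
  refine ⟨sSup c, fun s hs => ?_, fun z hz => le_sSup hz⟩
  obtain ⟨T, hT, hsT⟩ := (Subring.mem_sSup_of_directedOn ⟨y, hy⟩ hchain.directedOn).mp hs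
  exact hc hT s hsT

theorem signCompatible_range_eval₂ {M : Type*} [CommRing M] {i : M →+* L} {j : M →+* U} {c : L}
    {c' : U} (h : ∀ g : Polynomial M, 0 < g.eval₂ i c ↔ 0 < g.eval₂ j c') :
    SignCompatible (Polynomial.eval₂RingHom (i.prod j) (c, c')).range := by
  rintro _ ⟨g, rfl⟩
  rw [Polynomial.coe_eval₂RingHom, fst_eval₂_prod, snd_eval₂_prod]
  exact h g

variable [IsStrictOrderedRing L] [IsStrictOrderedRing U]

theorem SignCompatible.eq_zero_iff {S : Subring (L × U)} (hS : SignCompatible S) {s : L × U}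
    (hs : s ∈ S) : s.1 = 0 ↔ s.2 = 0 := by
  have h1 := hS s hs
  have h2 := hS (-s) (neg_mem hs)
  simp only [Prod.fst_neg, Prod.snd_neg, Left.neg_pos_iff] at h2
  constructor
  · intro h
    rw [h] at h1 h2
    exact le_antisymm (not_lt.mp fun h => lt_irrefl _ (h1.mpr h))
      (not_lt.mp fun h => lt_irrefl _ (h2.mpr h))
  · intro h
    rw [h] at h1 h2
    exact le_antisymm (not_lt.mp fun h => lt_irrefl _ (h1.mp h))
      (not_lt.mp fun h => lt_irrefl _ (h2.mp h))

theorem Maximal.mem_of_sign_iff {S : Subring (L × U)} (hS : Maximal SignCompatible S)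
    {M : Type*} [CommRing M] {i : M →+* L} {j : M →+* U} (hM : ∀ s ∈ S, ∃ m, (i m, j m) = s)
    {c : L} {c' : U} (h : ∀ g : Polynomial M, 0 < g.eval₂ i c ↔ 0 < g.eval₂ j c') :
    (c, c') ∈ S := by
  refine hS.2 (signCompatible_range_eval₂ h) (fun s hs => ?_) ⟨Polynomial.X, by simp⟩
  obtain ⟨m, rfl⟩ := hM s hs
  exact ⟨Polynomial.C m, by simp⟩

theorem eval₂_inv_pos_iff {R F : Type*} [CommRing R] [Field F] [LinearOrder F]
    [IsStrictOrderedRing F] (i : R →+* F) (r : R) (hr : i r ≠ 0) (g : Polynomial R) :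
    0 < g.eval₂ i (i r)⁻¹ ↔ 0 < i (g.reverse.eval r * r ^ g.natDegree) := by
  let _ : Invertible (i r)⁻¹ := invertibleOfNonzero (inv_ne_zero hr)
  have hrev := Polynomial.eval₂_reverse_mul_pow i (i r)⁻¹ g
  rw [invOf_eq_inv, inv_inv] at hrev
  have hrN : i r ^ g.natDegree ≠ 0 := pow_ne_zero _ hr
  have his : i (g.reverse.eval r * r ^ g.natDegree) =
      g.eval₂ i (i r)⁻¹ * (i r ^ g.natDegree) ^ 2 := by
    rw [← hrev, map_mul, map_pow, ← Polynomial.eval₂_at_apply, inv_pow]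
    field_simp
  rw [his, mul_pos_iff_of_pos_right (by positivity)]

theorem Maximal.inv_mem_of_signCompatible {S : Subring (L × U)} (hS : Maximal SignCompatible S)
    {a : L} {b : U} (hab : (a, b) ∈ S) : (a⁻¹, b⁻¹) ∈ S := by
  have hzero := hS.1.eq_zero_iff hab
  rcases eq_or_ne a 0 with rfl | ha
  · obtain rfl : b = 0 := hzero.mp rfl
    simpa using hab
  have hb : b ≠ 0 := fun h => ha (hzero.mpr h)
  refine hS.mem_of_sign_iff (i := (RingHom.fst L U).comp S.subtype)
    (j := (RingHom.snd L U).comp S.subtype) (fun s hs => ⟨⟨s, hs⟩, rfl⟩) fun g => ?_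
  have h1 := eval₂_inv_pos_iff ((RingHom.fst L U).comp S.subtype) ⟨(a, b), hab⟩ ha g
  have h2 := eval₂_inv_pos_iff ((RingHom.snd L U).comp S.subtype) ⟨(a, b), hab⟩ hb g
  exact h1.trans ((hS.1 _ (Subtype.prop
    (g.reverse.eval (⟨(a, b), hab⟩ : S) * ⟨(a, b), hab⟩ ^ g.natDegree))).trans h2.symm)

theorem Maximal.exists_subfield {S : Subring (L × U)} (hS : Maximal SignCompatible S) :
    ∃ (M : Subfield L) (j : M →+* U), StrictMono j ∧
      ∀ x u, (x, u) ∈ S ↔ ∃ m : M, (m : L) = x ∧ j m = u := by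
  have huniq : ∀ {x u u'}, (x, u) ∈ S → (x, u') ∈ S → u = u' := by
    intro x u u' h h'
    have h0 := sub_mem h h'
    exact sub_eq_zero.mp ((hS.1.eq_zero_iff h0).mp (sub_self x))
  let M : Subfield L :=
    { carrier := {x | ∃ u, (x, u) ∈ S}
      mul_mem' := by rintro x y ⟨u, hu⟩ ⟨v, hv⟩; exact ⟨u * v, mul_mem hu hv⟩
      one_mem' := ⟨1, one_mem S⟩
      add_mem' := by rintro x y ⟨u, hu⟩ ⟨v, hv⟩; exact ⟨u + v, add_mem hu hv⟩
      zero_mem' := ⟨0, zero_mem S⟩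
      neg_mem' := by rintro x ⟨u, hu⟩; exact ⟨-u, neg_mem hu⟩
      inv_mem' := by rintro x ⟨u, hu⟩; exact ⟨u⁻¹, hS.inv_mem_of_signCompatible hu⟩ }
  have hM : ∀ m : M, ∃ u, ((m : L), u) ∈ S := fun m => m.2
  choose j hj using hM
  let J : M →+* U :=
    { toFun := j
      map_one' := huniq (hj 1) (one_mem S)
      map_mul' := fun x y => huniq (hj (x * y)) (mul_mem (hj x) (hj y))
      map_zero' := huniq (hj 0) (zero_mem S)
      map_add' := fun x y => huniq (hj (x + y)) (add_mem (hj x) (hj y)) }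
  refine ⟨M, J, fun x y hxy => ?_, fun x u => ⟨fun h => ⟨⟨x, u, h⟩, rfl, huniq (hj _) h⟩, ?_⟩⟩
  · have := (hS.1 _ (sub_mem (hj y) (hj x))).mp (sub_pos.mpr hxy)
    exact sub_pos.mp this
  · rintro ⟨m, rfl, rfl⟩
    exact hj m

theorem Maximal.mem_of_root (hL : PolyIVT L) (hU : PolyIVT U) {S : Subring (L × U)}
    (hS : Maximal SignCompatible S) {M : Subfield L} {j : M →+* U} (hj : StrictMono j)
    (hMS : ∀ x u, (x, u) ∈ S ↔ ∃ m : M, (m : L) = x ∧ j m = u) {g : Polynomial M} (hg : g ≠ 0)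
    {y : L} (hy : g.eval₂ M.subtype y = 0) : ∃ m, M.subtype m = y := by
  classical
  by_contra hcon
  let bad : ℕ → Prop := fun d => ∃ g : Polynomial M, g ≠ 0 ∧ g.natDegree = d ∧
    ((∃ y, g.eval₂ M.subtype y = 0 ∧ ∀ m, M.subtype m ≠ y) ∨
      (∃ y, g.eval₂ j y = 0 ∧ ∀ m, j m ≠ y))
  have hbad : ∃ d, bad d := ⟨_, g, hg, rfl, .inl ⟨y, hy, fun m hm => hcon ⟨m, hm⟩⟩⟩
  have hmin : ∀ d, d < Nat.find hbad → ¬ bad d := fun d hd => Nat.find_min hbad hd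
  obtain ⟨f, hf0, hfd, hf⟩ := Nat.find_spec hbad
  have hi : StrictMono M.subtype := fun _ _ h => h
  have hfL : ∀ g : Polynomial M, g ≠ 0 → g.natDegree < f.natDegree →
      ∀ y, g.eval₂ M.subtype y = 0 → ∃ m, M.subtype m = y := by
    intro g hg hd y hy
    by_contra h
    exact hmin _ (hfd ▸ hd) ⟨g, hg, rfl, .inl ⟨y, hy, fun m hm => h ⟨m, hm⟩⟩⟩
  have hfU : ∀ g : Polynomial M, g ≠ 0 → g.natDegree < f.natDegree →
      ∀ y, g.eval₂ j y = 0 → ∃ m, j m = y := by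
    intro g hg hd y hy
    by_contra h
    exact hmin _ (hfd ▸ hd) ⟨g, hg, rfl, .inr ⟨y, hy, fun m hm => h ⟨m, hm⟩⟩⟩
  have hSM : ∀ s ∈ S, ∃ m, (M.subtype m, j m) = s := fun s hs => by
    obtain ⟨m, h1, h2⟩ := (hMS s.1 s.2).mp hs
    exact ⟨m, Prod.ext h1 h2⟩
  rcases hf with ⟨c, hfc, hc⟩ | ⟨c', hfc', hc'⟩
  · obtain ⟨c', h⟩ := exists_same_sign_of_root hL hU hi hj hf0 hfL hfU hfc hc
    obtain ⟨m, hm, -⟩ := (hMS c c').mp (hS.mem_of_sign_iff hSM h)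
    exact hc m hm
  · obtain ⟨c, h⟩ := exists_same_sign_of_root hU hL hj hi hf0 hfU hfL hfc' hc'
    obtain ⟨m, -, hm⟩ := (hMS c c').mp (hS.mem_of_sign_iff hSM fun g => (h g).symm)
    exact hc' m hm

end PartialIsomorphism

section Ultrapower

variable {I U : Type*} [Field U] (V : Ultrafilter I)

/-- The diagonal embedding of `U` in its ultrapower. -/
def Ultrafilter.diagonal : U →+* Filter.Germ (V : Filter I) U :=
  (Filter.Germ.coeRingHom (V : Filter I)).comp (Pi.constRingHom I U)

theorem Ultrafilter.eval₂_diagonal {M : Type*} [CommRing M] (j : M →+* U) (g : Polynomial M)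
    (x : I → U) : g.eval₂ (V.diagonal.comp j) (x : Filter.Germ (V : Filter I) U) =
      ((fun e => g.eval₂ j (x e) : I → U) : Filter.Germ (V : Filter I) U) := by
  have h1 := Polynomial.hom_eval₂ g ((Pi.constRingHom I U).comp j)
    (Filter.Germ.coeRingHom (V : Filter I)) x
  have h2 : g.eval₂ ((Pi.constRingHom I U).comp j) x = fun e => g.eval₂ j (x e) :=
    funext fun e => Polynomial.hom_eval₂ g ((Pi.constRingHom I U).comp j) (Pi.evalRingHom _ e) x
  rw [h2] at h1
  exact h1.symm

theorem Ultrafilter.mvEval₂_diagonal {σ : Type*} (j : ℝ →+* U) (p : MvPolynomial σ ℝ)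
    (x : σ → I → U) :
    p.eval₂ (V.diagonal.comp j) (fun k => (x k : Filter.Germ (V : Filter I) U)) =
      ((fun e => p.eval₂ j (fun k => x k e) : I → U) : Filter.Germ (V : Filter I) U) := by
  have h1 := MvPolynomial.hom_eval₂ p ((Pi.constRingHom I U).comp j)
    (Filter.Germ.coeRingHom (V : Filter I)) x
  have h2 : p.eval₂ ((Pi.constRingHom I U).comp j) x = fun e => p.eval₂ j (fun k => x k e) :=
    funext fun e => MvPolynomial.hom_eval₂ p ((Pi.constRingHom I U).comp j) (Pi.evalRingHom _ e) x
  rw [h2] at h1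
  exact h1.symm

theorem Ultrafilter.exists_eval_eq_coe (f : Polynomial (Filter.Germ (V : Filter I) U)) :
    ∃ F : I → Polynomial U, ∀ x : I → U, f.eval (x : Filter.Germ (V : Filter I) U) =
      ((fun e => (F e).eval (x e) : I → U) : Filter.Germ (V : Filter I) U) := by
  induction f using Polynomial.induction_on' with
  | add p q hp hq =>
    obtain ⟨P, hP⟩ := hp
    obtain ⟨Q, hQ⟩ := hq
    refine ⟨fun e => P e + Q e, fun x => ?_⟩
    rw [Polynomial.eval_add, hP, hQ, ← Filter.Germ.coe_add]
    simp [Pi.add_def]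
  | monomial n a =>
    induction a using Filter.Germ.inductionOn with
    | _ a =>
      refine ⟨fun e => Polynomial.monomial n (a e), fun x => ?_⟩
      rw [Polynomial.eval_monomial, ← Filter.Germ.coe_pow, ← Filter.Germ.coe_mul]
      simp [Pi.mul_def, Pi.pow_def]

variable [LinearOrder U]

theorem PolyIVT.germ (hU : PolyIVT U) : PolyIVT (Filter.Germ (V : Filter I) U) := by
  intro f a b hab hf
  induction a using Filter.Germ.inductionOn with | _ a
  induction b using Filter.Germ.inductionOn with | _ b
  obtain ⟨F, hF⟩ := V.exists_eval_eq_coe f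
  rw [hF, hF, ← Filter.Germ.coe_mul, ← Filter.Germ.coe_zero, Filter.Germ.coe_lt] at hf
  rw [Filter.Germ.coe_lt] at hab
  have hex : ∀ e, ∃ c, a e < b e → (F e).eval (a e) * (F e).eval (b e) < 0 →
      a e < c ∧ c < b e ∧ (F e).eval c = 0 := by
    intro e
    by_cases h : a e < b e ∧ (F e).eval (a e) * (F e).eval (b e) < 0
    · obtain ⟨c, hc⟩ := hU (F e) (a e) (b e) h.1 h.2
      exact ⟨c, fun _ _ => hc⟩
    · exact ⟨0, fun h1 h2 => absurd ⟨h1, h2⟩ h⟩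
  choose c hc using hex
  refine ⟨(c : Filter.Germ (V : Filter I) U), ?_, ?_, ?_⟩
  · rw [Filter.Germ.coe_lt]
    filter_upwards [hab, hf] with e h1 h2 using (hc e h1 h2).1
  · rw [Filter.Germ.coe_lt]
    filter_upwards [hab, hf] with e h1 h2 using (hc e h1 h2).2.1
  · rw [hF, ← Filter.Germ.coe_zero, Filter.Germ.coe_eq]
    filter_upwards [hab, hf] with e h1 h2 using (hc e h1 h2).2.2

variable [IsStrictOrderedRing U]

/-- A cut over a subfield is realized in an ultrapower. -/
theorem exists_ultrafilter_same_sign {M L : Type*} [Field M] [LinearOrder M]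
    [IsStrictOrderedRing M] [Field L] [LinearOrder L] [IsStrictOrderedRing L] (hL : PolyIVT L)
    {i : M →+* L} {j : M →+* U} (hi : StrictMono i) (hj : StrictMono j)
    (hroot : ∀ g : Polynomial M, g ≠ 0 → ∀ y, g.eval₂ i y = 0 → ∃ m, i m = y)
    {t : L} (ht : ∀ m, i m ≠ t) :
    ∃ (V : Ultrafilter M) (τ : Filter.Germ (V : Filter M) U), ∀ g : Polynomial M,
      0 < g.eval₂ i t ↔ 0 < g.eval₂ (V.diagonal.comp j) τ := by
  let A : M → Set M := fun z => {e | (i z < t → z < e) ∧ (t < i z → e < z)}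
  obtain ⟨V, hV⟩ := Ultrafilter.exists_ultrafilter_of_finite_inter_nonempty (Set.range A) (by
    intro T hT
    classical
    rw [← Set.image_univ] at hT
    obtain ⟨Z, -, rfl⟩ := Finset.subset_set_image_iff.mp hT
    obtain ⟨e, he⟩ := exists_separating hi Z t
    exact ⟨e, by simpa [A] using he⟩)
  have hA : ∀ z, ∀ᶠ e in (V : Filter M), e ∈ A z := fun z => hV ⟨z, rfl⟩
  have hpos : ∀ g : Polynomial M, 0 < g.eval₂ i t →
      0 < g.eval₂ (V.diagonal.comp j) ((fun e => j e : M → U) : Filter.Germ (V : Filter M) U) := by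
    intro g hg
    have hg0 : g ≠ 0 := by rintro rfl; simp at hg
    rw [V.eval₂_diagonal, Filter.Germ.coe_pos]
    have hall : ∀ᶠ e in (V : Filter M), ∀ z ∈ g.roots.toFinset, e ∈ A z :=
      (Filter.eventually_all_finset _).mpr fun z _ => hA z
    filter_upwards [hall] with e he
    rw [Polynomial.eval₂_at_apply, ← map_zero j, hj.lt_iff_lt]
    exact (eval₂_pos_iff_of_separating hL hi (hroot g hg0) ht
      fun z hz => he z (by simpa [hg0] using hz)).mp hg
  refine ⟨V, _, fun g => ⟨hpos g, fun h => ?_⟩⟩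
  rcases lt_trichotomy (g.eval₂ i t) 0 with hlt | heq | hgt
  · have := hpos (-g) (by simpa using hlt)
    rw [Polynomial.eval₂_neg] at this
    exact absurd h (neg_pos.mp this).not_gt
  · rcases eq_or_ne g 0 with rfl | hg0
    · simp at h
    · obtain ⟨m, hm⟩ := hroot g hg0 t heq
      exact absurd hm (ht m)
  · exact hgt

end Ultrapower

section Transfer

variable {L U : Type} [Field L] [LinearOrder L] [IsStrictOrderedRing L]
  [Field U] [LinearOrder U]

theorem Ultrafilter.diagonal_strictMono {I : Type*} (V : Ultrafilter I) :
    StrictMono (V.diagonal : U →+* Filter.Germ (V : Filter I) U) := fun _ _ h =>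
  Filter.Germ.coe_lt.mpr (Filter.Eventually.of_forall fun _ => h)

/-- The system `b k ≥ 0`, `p < 0` has a solution over the field `U`. -/
def HasSolution {σ ι : Type*} (ρ : ℝ →+* U) (b : ι → MvPolynomial σ ℝ) (p : MvPolynomial σ ℝ) :
    Prop :=
  ∃ y : σ → U, (∀ k, 0 ≤ (b k).eval₂ ρ y) ∧ p.eval₂ ρ y < 0

theorem HasSolution.of_germ {σ ι : Type*} {I : Type} [Finite ι] {V : Ultrafilter I} {ρ : ℝ →+* U}
    {b : ι → MvPolynomial σ ℝ} {p : MvPolynomial σ ℝ} (h : HasSolution (V.diagonal.comp ρ) b p) :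
    HasSolution ρ b p := by
  obtain ⟨y, hb, hp⟩ := h
  have hrep : ∀ k, ∃ x : I → U, (x : Filter.Germ (V : Filter I) U) = y k := fun k =>
    Quotient.exists_rep (y k)
  choose x hx using hrep
  obtain rfl : (fun k => (x k : Filter.Germ (V : Filter I) U)) = y := funext hx
  simp only [V.mvEval₂_diagonal, ← Filter.Germ.coe_zero, Filter.Germ.coe_lt,
    Filter.Germ.coe_le] at hb hp
  obtain ⟨e, he, he'⟩ := ((Filter.eventually_all.mpr hb).and hp).exists
  exact ⟨fun k => x k e, he, he'⟩

variable [IsStrictOrderedRing U]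

/-- Back-and-forth step: after passing to an ultrapower of `U`, a partial isomorphism between `L`
and `U` extends to any given element of `L`. -/
theorem SignCompatible.exists_germ_extension (hL : PolyIVT L) (hU : PolyIVT U)
    {S : Subring (L × U)} (hS : SignCompatible S) (t : L) :
    ∃ (I : Type) (V : Ultrafilter I) (S' : Subring (L × Filter.Germ (V : Filter I) U)),
      SignCompatible S' ∧ (∀ s ∈ S, (s.1, V.diagonal s.2) ∈ S') ∧ ∃ τ, (t, τ) ∈ S' := by
  obtain ⟨S₁, hSS₁, hS₁⟩ := hS.exists_le_maximal
  obtain ⟨M, j, hj, hMS⟩ := hS₁.exists_subfield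
  have hi : StrictMono M.subtype := fun _ _ h => h
  have hext : ∃ (V : Ultrafilter M) (τ : Filter.Germ (V : Filter M) U), ∀ g : Polynomial M,
      0 < g.eval₂ M.subtype t ↔ 0 < g.eval₂ (V.diagonal.comp j) τ := by
    by_cases ht : ∃ m, M.subtype m = t
    · obtain ⟨m, rfl⟩ := ht
      refine ⟨pure 0, (Ultrafilter.diagonal _).comp j m, fun g => ?_⟩
      have hcomp : StrictMono ((Ultrafilter.diagonal (pure (0 : M))).comp j) :=
        (Ultrafilter.diagonal_strictMono _).comp hj
      rw [Polynomial.eval₂_at_apply, Polynomial.eval₂_at_apply, ← map_zero M.subtype,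
        hi.lt_iff_lt, ← map_zero ((Ultrafilter.diagonal (pure (0 : M))).comp j), hcomp.lt_iff_lt]
    · push Not at ht
      exact exists_ultrafilter_same_sign hL hi hj
        (fun g hg y hy => hS₁.mem_of_root hL hU hj hMS hg hy) ht
  obtain ⟨V, τ, hτ⟩ := hext
  refine ⟨M, V, _, signCompatible_range_eval₂ hτ, fun s hs => ?_, τ, Polynomial.X, by simp⟩
  obtain ⟨m, hm1, hm2⟩ := (hMS s.1 s.2).mp (hSS₁ hs)
  exact ⟨Polynomial.C m, by simp [← hm1, ← hm2]⟩

theorem ringHom_real_strictMono (ρ : ℝ →+* L) : StrictMono ρ := by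
  refine (monotone_iff_map_nonneg ρ).mpr (fun r hr => ?_) |>.strictMono_of_injective ρ.injective
  rw [← Real.mul_self_sqrt hr, map_mul]
  exact mul_self_nonneg _

/-- A system of polynomial inequalities over `ℝ` which is solvable in an ordered extension field
with the intermediate value property is solvable in `ℝ`. -/
theorem HasSolution.real (hL : PolyIVT L) {n : ℕ} {ι : Type*} [Finite ι] {ρ : ℝ →+* L}
    {b : ι → MvPolynomial (Fin n) ℝ} {p : MvPolynomial (Fin n) ℝ} (h : HasSolution ρ b p) :
    HasSolution (RingHom.id ℝ) b p := by
  obtain ⟨a, hb, hp⟩ := h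
  have key : ∀ T : Finset (Fin n), ∃ (U : Type) (_ : Field U) (_ : LinearOrder U)
      (_ : IsStrictOrderedRing U) (ρ' : ℝ →+* U), PolyIVT U ∧
      (HasSolution ρ' b p → HasSolution (RingHom.id ℝ) b p) ∧
      ∃ S : Subring (L × U), SignCompatible S ∧ (∀ r, (ρ r, ρ' r) ∈ S) ∧
        ∀ k ∈ T, ∃ u, (a k, u) ∈ S := by
    intro T
    induction T using Finset.induction_on with
    | empty =>
      refine ⟨ℝ, inferInstance, inferInstance, inferInstance, RingHom.id ℝ, polyIVT_real, id,
        (ρ.prod (RingHom.id ℝ)).range, ?_, fun r => ⟨r, rfl⟩, by simp⟩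
      rintro _ ⟨r, rfl⟩
      simpa using (ringHom_real_strictMono ρ).lt_iff_lt (a := 0) (b := r)
    | insert k T _ ih =>
      obtain ⟨U, _, _, _, ρ', hU, hsol, S, hS, hρ, hT⟩ := ih
      obtain ⟨I, V, S', hS', hSS', hk⟩ := hS.exists_germ_extension hL hU (a k)
      refine ⟨Filter.Germ (V : Filter I) U, inferInstance, inferInstance, inferInstance,
        V.diagonal.comp ρ', hU.germ V, fun h => hsol h.of_germ, S', hS',
        fun r => hSS' _ (hρ r), fun l hl => ?_⟩
      rcases Finset.mem_insert.mp hl with rfl | hl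
      · exact hk
      · obtain ⟨u, hu⟩ := hT l hl
        exact ⟨_, hSS' _ hu⟩
  obtain ⟨U, _, _, _, ρ', hU, hsol, S, hS, hρ, hT⟩ := key Finset.univ
  choose y hy using fun k => hT k (Finset.mem_univ k)
  have hmem : ∀ q : MvPolynomial (Fin n) ℝ, (q.eval₂ ρ a, q.eval₂ ρ' y) ∈ S := by
    intro q
    induction q using MvPolynomial.induction_on with
    | C r => simpa using hρ r
    | add q₁ q₂ h₁ h₂ => simpa using add_mem h₁ h₂
    | mul_X q k h => simpa using mul_mem h (hy k)
  refine hsol ⟨y, fun k => ?_, ?_⟩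
  · have := hS _ (neg_mem (hmem (b k)))
    simp only [Prod.fst_neg, Prod.snd_neg, Left.neg_pos_iff] at this
    exact not_lt.mp fun h => (this.mpr h).not_ge (hb k)
  · have := hS _ (neg_mem (hmem p))
    simp only [Prod.fst_neg, Prod.snd_neg, Left.neg_pos_iff] at this
    exact this.mp hp

end Transfer

section Orderings

variable {A : Type*} [CommRing A]

/-- The subsemiring `S + a * S`, when `S` contains all squares. -/
def Subsemiring.adjoinElement (S : Subsemiring A) (hS : ∀ x, x * x ∈ S) (a : A) :
    Subsemiring A where
  carrier := {x | ∃ s ∈ S, ∃ t ∈ S, x = s + a * t}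
  mul_mem' := by
    rintro _ _ ⟨s, hs, t, ht, rfl⟩ ⟨s', hs', t', ht', rfl⟩
    exact ⟨s * s' + a * a * (t * t'),
      add_mem (mul_mem hs hs') (mul_mem (hS a) (mul_mem ht ht')), s * t' + t * s',
      add_mem (mul_mem hs ht') (mul_mem ht hs'), by ring⟩
  one_mem' := ⟨1, one_mem S, 0, zero_mem S, by ring⟩
  add_mem' := by
    rintro _ _ ⟨s, hs, t, ht, rfl⟩ ⟨s', hs', t', ht', rfl⟩
    exact ⟨s + s', add_mem hs hs', t + t', add_mem ht ht', by ring⟩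
  zero_mem' := ⟨0, zero_mem S, 0, zero_mem S, by ring⟩

theorem Subsemiring.exists_isOrdering {T : Subsemiring A} (hT : ∀ x, x * x ∈ T) {p : A}
    (hp : ∀ k : ℕ, -p ^ (2 * k) ∉ T) :
    ∃ Q : RingPreordering A, Q.IsOrdering ∧ (∀ x ∈ T, x ∈ Q) ∧ ∀ k : ℕ, -p ^ (2 * k) ∉ Q := by
  obtain ⟨S, hTS, hS⟩ := zorn_le_nonempty₀ {S : Subsemiring A | T ≤ S ∧ ∀ k : ℕ, -p ^ (2 * k) ∉ S}
    (by
      intro c hc hchain y hy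
      refine ⟨sSup c, ⟨(hc hy).1.trans (le_sSup hy), fun k hk => ?_⟩, fun z hz => le_sSup hz⟩
      obtain ⟨S, hS, hkS⟩ := (Subsemiring.mem_sSup_of_directedOn ⟨y, hy⟩ hchain.directedOn).mp hk
      exact (hc hS).2 k hkS) T ⟨le_rfl, hp⟩
  have hsq : ∀ x, x * x ∈ S := fun x => hTS (hT x)
  have hpS : ∀ k : ℕ, p ^ (2 * k) ∈ S := fun k => by
    rw [mul_comm, pow_mul, sq]
    exact hsq _
  have hadj : ∀ a ∉ S, ∃ k : ℕ, ∃ s ∈ S, ∃ t ∈ S, -p ^ (2 * k) = s + a * t := by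
    intro a ha
    by_contra! hcon
    have hle : S ≤ S.adjoinElement hsq a := fun s hs => ⟨s, hs, 0, zero_mem S, by ring⟩
    refine ha (hS.2 ⟨hTS.trans hle, ?_⟩ hle ⟨0, zero_mem S, 1, one_mem S, by ring⟩)
    rintro k ⟨s, hs, t, ht, h⟩
    exact hcon k s hs t ht h
  refine ⟨⟨S, ?_, ?_⟩, ?_, fun x hx => hTS hx, hS.1.2⟩
  · rintro _ ⟨x, rfl⟩
    exact hsq x
  · simpa using hS.1.2 0
  · rw [RingPreordering.isOrdering_iff]
    intro a b hab
    by_contra! hcon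
    obtain ⟨k, s, hs, t, ht, h⟩ := hadj a hcon.1
    obtain ⟨l, s', hs', t', ht', h'⟩ := hadj b hcon.2
    refine hS.1.2 (k + l) ?_
    have : -p ^ (2 * (k + l)) =
        -(a * b) * (t * t') + (p ^ (2 * k) * s' + s * p ^ (2 * l) + s * s') := by
      linear_combination (p ^ (2 * l) + s') * h - a * t * h'
    rw [this]
    exact add_mem (mul_mem hab (mul_mem ht ht'))
      (add_mem (add_mem (mul_mem (hpS k) hs') (mul_mem hs (hpS l))) (mul_mem hs hs'))

/-- A subsemiring of a field containing the squares but not `-1` is nonnegative for some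
linear ordering of the field. -/
theorem Subsemiring.exists_linearOrder {F : Type*} [Field F] {T : Subsemiring F}
    (hT : ∀ x, x * x ∈ T) (hneg : -1 ∉ T) :
    ∃ _ : LinearOrder F, IsStrictOrderedRing F ∧ ∀ x ∈ T, 0 ≤ x := by
  classical
  obtain ⟨Q, hQ, hTQ, -⟩ := exists_isOrdering hT (p := 1) (by simpa using hneg)
  let C : RingCone F := ⟨Q.toSubsemiring, fun h h' => Q.eq_zero_of_mem_of_neg_mem h h'⟩
  have : HasMemOrNegMem C := ⟨fun x => mem_or_neg_mem Q x⟩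
  let _ : LinearOrder F := LinearOrder.mkOfAddGroupCone C
  have : IsOrderedRing F := IsOrderedRing.mkOfCone C
  exact ⟨inferInstance, IsOrderedRing.toIsStrictOrderedRing F, fun x hx =>
    show x - 0 ∈ Q by simpa using hTQ x hx⟩

end Orderings

section OrderedField

/-- The residue field of an ordering is an ordered field. -/
theorem RingPreordering.exists_orderedField {A : Type} [CommRing A] (Q : RingPreordering A)
    [Q.IsOrdering] :
    ∃ (K : Type) (_ : Field K) (_ : LinearOrder K) (_ : IsStrictOrderedRing K) (ψ : A →+* K),
      (∀ a ∈ Q, 0 ≤ ψ a) ∧ ∀ a, ψ a = 0 → -a ∈ Q := by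
  let K := FractionRing (A ⧸ Q.support)
  let ψ : A →+* K := (algebraMap (A ⧸ Q.support) K).comp (Ideal.Quotient.mk Q.support)
  have hψ : ∀ a, ψ a = 0 ↔ a ∈ Q.support := fun a => by
    rw [← Ideal.Quotient.eq_zero_iff_mem]
    exact (IsFractionRing.injective (A ⧸ Q.support) K).eq_iff' (map_zero _)
  have hdiv : ∀ x : K, ∃ a s, ψ s ≠ 0 ∧ x * ψ s = ψ a := by
    intro x
    obtain ⟨a, s, hs, rfl⟩ := IsFractionRing.div_surjective (A := A ⧸ Q.support) x
    obtain ⟨a, rfl⟩ := Ideal.Quotient.mk_surjective a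
    obtain ⟨s, rfl⟩ := Ideal.Quotient.mk_surjective s
    have hs0 : ψ s ≠ 0 :=
      IsFractionRing.to_map_ne_zero_of_mem_nonZeroDivisors (R := A ⧸ Q.support) hs
    exact ⟨a, s, hs0, div_mul_cancel₀ _ hs0⟩
  let T : Subsemiring K :=
    { carrier := {x | ∃ a ∈ Q, ∃ s, ψ s ≠ 0 ∧ x * ψ s ^ 2 = ψ a}
      mul_mem' := by
        rintro x y ⟨a, ha, s, hs, h⟩ ⟨a', ha', s', hs', h'⟩
        refine ⟨a * a', mul_mem ha ha', s * s', ?_, ?_⟩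
        · rw [map_mul]
          exact mul_ne_zero hs hs'
        · rw [map_mul, map_mul, ← h, ← h']
          ring
      one_mem' := ⟨1, one_mem Q, 1, by simp, by simp⟩
      add_mem' := by
        rintro x y ⟨a, ha, s, hs, h⟩ ⟨a', ha', s', hs', h'⟩
        refine ⟨a * s' ^ 2 + a' * s ^ 2, add_mem (mul_mem ha (Q.pow_two_mem _))
          (mul_mem ha' (Q.pow_two_mem _)), s * s', ?_, ?_⟩
        · rw [map_mul]
          exact mul_ne_zero hs hs'
        · simp only [map_mul, map_add, map_pow, ← h, ← h']
          ring
      zero_mem' := ⟨0, zero_mem Q, 1, by simp, by simp⟩ }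
  have hsq : ∀ x, x * x ∈ T := by
    intro x
    obtain ⟨a, s, hs, h⟩ := hdiv x
    refine ⟨a * a, Q.mul_self_mem a, s, hs, ?_⟩
    rw [map_mul, ← h]
    ring
  have hneg : -1 ∉ T := by
    rintro ⟨a, ha, s, hs, h⟩
    have hmem : a + s ^ 2 ∈ Q.support := by
      rw [← hψ, map_add, map_pow, ← h]
      ring
    have hs2 : s ^ 2 ∈ Q.support :=
      mem_support.mpr ⟨Q.pow_two_mem s, by simpa using add_mem (mem_support.mp hmem).2 ha⟩
    rw [← hψ, map_pow] at hs2
    exact hs (pow_eq_zero_iff two_ne_zero |>.mp hs2)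
  obtain ⟨_, hK, hT⟩ := Subsemiring.exists_linearOrder hsq hneg
  exact ⟨K, inferInstance, inferInstance, hK, ψ, fun a ha => hT _ ⟨a, ha, 1, by simp, by simp⟩,
    fun a ha => (mem_support.mp ((hψ a).mp ha)).2⟩

/-- The cone generated by the squares of polynomials with nonnegative coefficients. -/
noncomputable def Polynomial.squareCone (F : Type*) [Field F] [LinearOrder F] : AddSubmonoid (Polynomial F) :=
  AddSubmonoid.closure {q | ∃ p : F, 0 ≤ p ∧ ∃ g : Polynomial F, q = Polynomial.C p * g ^ 2}

variable {F : Type*} [Field F] [LinearOrder F] [IsStrictOrderedRing F]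

theorem Polynomial.eval_nonneg_of_mem_squareCone {G : Polynomial F}
    (hG : G ∈ Polynomial.squareCone F) (a : F) : 0 ≤ G.eval a := by
  induction hG using AddSubmonoid.closure_induction with
  | mem q hq =>
    obtain ⟨p, hp, g, rfl⟩ := hq
    simp only [Polynomial.eval_mul, Polynomial.eval_C, Polynomial.eval_pow]
    positivity
  | zero => simp
  | add q r _ _ hq hr => simpa using add_nonneg hq hr

theorem Polynomial.exists_mem_squareCone_natDegree_lt {f : Polynomial F} (hf : f.natDegree ≠ 0)
    {G : Polynomial F} (hG : G ∈ Polynomial.squareCone F) :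
    ∃ G' ∈ Polynomial.squareCone F, f ∣ G - G' ∧ G'.natDegree < 2 * f.natDegree := by
  induction hG using AddSubmonoid.closure_induction with
  | mem q hq =>
    obtain ⟨p, hp, g, rfl⟩ := hq
    refine ⟨Polynomial.C p * (g % f) ^ 2, AddSubmonoid.subset_closure ⟨p, hp, _, rfl⟩, ?_, ?_⟩
    · rw [← mul_sub, sq_sub_sq]
      have hdvd : f ∣ g - g % f := ⟨g / f, by rw [EuclideanDomain.mod_eq_sub_mul_div]; ring⟩
      exact (hdvd.mul_left _).mul_left _
    · have h1 := Polynomial.natDegree_mod_lt g hf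
      have h2 := Polynomial.natDegree_C_mul_le p ((g % f) ^ 2)
      rw [Polynomial.natDegree_pow] at h2
      omega
  | zero => exact ⟨0, zero_mem _, by simp, by simp; omega⟩
  | add q r _ _ hq hr =>
    obtain ⟨q', hq', hdq, hnq⟩ := hq
    obtain ⟨r', hr', hdr, hnr⟩ := hr
    refine ⟨q' + r', add_mem hq' hr', ?_, ?_⟩
    · rw [add_sub_add_comm]
      exact dvd_add hdq hdr
    · exact (Polynomial.natDegree_add_le _ _).trans_lt (max_lt hnq hnr)

theorem Polynomial.not_dvd_one_add_of_eval_mul_eval_neg {a b : F} :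
    ∀ {f : Polynomial F}, f.eval a * f.eval b < 0 → ∀ {G}, G ∈ Polynomial.squareCone F →
      ¬ f ∣ 1 + G := by
  suffices ∀ (d : ℕ) {f : Polynomial F}, f.natDegree = d → f.eval a * f.eval b < 0 →
      ∀ {G}, G ∈ Polynomial.squareCone F → ¬ f ∣ 1 + G from
    fun _ h => this _ rfl h
  intro d
  induction d using Nat.strong_induction_on with
  | _ d ih =>
    rintro f hfd hf G hG hdvd
    have hd : f.natDegree ≠ 0 := by
      intro h
      rw [Polynomial.eq_C_of_natDegree_eq_zero h] at hf
      simp only [Polynomial.eval_C] at hf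
      exact (mul_self_nonneg _).not_gt hf
    obtain ⟨G', hG', hdvd', hdeg⟩ := Polynomial.exists_mem_squareCone_natDegree_lt hd hG
    have hpos : ∀ x, 0 < (1 + G').eval x := fun x => by
      have := Polynomial.eval_nonneg_of_mem_squareCone hG' x
      rw [Polynomial.eval_add, Polynomial.eval_one]
      positivity
    obtain ⟨h, hh⟩ : f ∣ 1 + G' := by
      have := dvd_sub hdvd hdvd'
      rwa [show 1 + G - (G - G') = 1 + G' by ring] at this
    have hne : f * h ≠ 0 := by
      intro h0
      have := hpos a
      rw [hh, h0] at this
      simp at this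
    have hdeg' : (1 + G').natDegree < 2 * f.natDegree := by
      refine (Polynomial.natDegree_add_le _ _).trans_lt (max_lt ?_ hdeg)
      rw [Polynomial.natDegree_one]
      omega
    rw [hh, Polynomial.natDegree_mul (left_ne_zero_of_mul hne) (right_ne_zero_of_mul hne)] at hdeg'
    refine ih h.natDegree (by omega) rfl ?_ hG' ⟨f, by rw [hh, mul_comm]⟩
    have ha := hpos a
    have hb := hpos b
    rw [hh, Polynomial.eval_mul] at ha hb
    have := mul_pos ha hb
    by_contra! hcon
    nlinarith [mul_nonneg hcon (neg_nonneg.mpr hf.le)]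

end OrderedField

section RealClosure

variable {K Ω : Type*} [Field K] [LinearOrder K] [Field Ω] [Algebra K Ω]

/-- The cone generated in `Ω` by the nonnegative multiples of squares of elements of `E`. -/
def IntermediateField.squareCone (E : IntermediateField K Ω) : AddSubmonoid Ω :=
  AddSubmonoid.closure {y | ∃ p : K, 0 ≤ p ∧ ∃ x ∈ E, y = algebraMap K Ω p * x ^ 2}

namespace IntermediateField

theorem mul_sq_mem_squareCone {E : IntermediateField K Ω} {p : K} (hp : 0 ≤ p) {x : Ω}
    (hx : x ∈ E) : algebraMap K Ω p * x ^ 2 ∈ E.squareCone :=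
  AddSubmonoid.subset_closure ⟨p, hp, x, hx, rfl⟩

theorem squareCone_mono {E E' : IntermediateField K Ω} (h : E ≤ E') :
    E.squareCone ≤ E'.squareCone :=
  AddSubmonoid.closure_mono fun _ ⟨p, hp, x, hx, hy⟩ => ⟨p, hp, x, h hx, hy⟩

/-- A maximal field whose cone omits `-1` contains the roots of the irreducible polynomials that
change sign. -/
theorem mem_of_maximal_of_aeval_eq_zero {E : IntermediateField K Ω}
    (hE : Maximal (fun E => -1 ∉ E.squareCone) E) [LinearOrder E] [IsStrictOrderedRing E]
    (hord : ∀ p : K, 0 ≤ p → 0 ≤ algebraMap K E p) {f : Polynomial E} (hirr : Irreducible f)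
    {a b : E} (hf : f.eval a * f.eval b < 0) {α : Ω} (hα : Polynomial.aeval α f = 0) : α ∈ E := by
  have halg : IsAlgebraic E α := ⟨f, hirr.ne_zero, hα⟩
  refine hE.2 (y := (adjoin E {α}).restrictScalars K) (fun hneg => ?_) ?_
    (mem_adjoin_simple_self E α)
  · have key : ∀ y ∈ ((adjoin E {α}).restrictScalars K).squareCone,
        ∃ G ∈ Polynomial.squareCone E, Polynomial.aeval α G = y := by
      intro y hy
      induction hy using AddSubmonoid.closure_induction with
      | mem y hy =>
        obtain ⟨p, hp, x, hx, rfl⟩ := hy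
        have hx' : x ∈ (adjoin E {α}).toSubalgebra := hx
        rw [adjoin_simple_toSubalgebra_of_isAlgebraic halg,
          Algebra.adjoin_singleton_eq_range_aeval] at hx'
        obtain ⟨g, rfl⟩ := hx'
        refine ⟨Polynomial.C (algebraMap K E p) * g ^ 2,
          AddSubmonoid.subset_closure ⟨_, hord p hp, g, rfl⟩, ?_⟩
        rw [map_mul, map_pow, Polynomial.aeval_C, ← IsScalarTower.algebraMap_apply]
        rfl
      | zero => exact ⟨0, zero_mem _, map_zero _⟩
      | add x y _ _ hx hy =>
        obtain ⟨G, hG, rfl⟩ := hx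
        obtain ⟨G', hG', rfl⟩ := hy
        exact ⟨G + G', add_mem hG hG', map_add _ _ _⟩
    obtain ⟨G, hG, hGα⟩ := key _ hneg
    refine Polynomial.not_dvd_one_add_of_eval_mul_eval_neg hf hG ?_
    refine Dvd.dvd.trans ?_ (minpoly.dvd E α (p := 1 + G) (by simp [hGα]))
    rw [← minpoly.eq_of_irreducible hirr hα]
    exact dvd_mul_right _ _
  · intro x hx
    exact (adjoin E {α}).algebraMap_mem ⟨x, hx⟩

theorem polyIVT_of_maximal [IsAlgClosed Ω] {E : IntermediateField K Ω}
    (hE : Maximal (fun E => -1 ∉ E.squareCone) E) [LinearOrder E] [IsStrictOrderedRing E]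
    (hord : ∀ p : K, 0 ≤ p → 0 ≤ algebraMap K E p) : PolyIVT E := by
  intro f a b hab
  induction hd : f.natDegree using Nat.strong_induction_on generalizing f with
  | _ d ih =>
    intro hf
    have hf0 : f ≠ 0 := by
      rintro rfl
      simp at hf
    have hfu : ¬ IsUnit f := by
      intro hu
      obtain ⟨c, -, rfl⟩ := Polynomial.isUnit_iff.mp hu
      simp only [Polynomial.eval_C] at hf
      exact (mul_self_nonneg _).not_gt hf
    by_cases hirr : Irreducible f
    · obtain ⟨α, hα⟩ := IsAlgClosed.exists_aeval_eq_zero (k := Ω) f hirr.degree_pos.ne'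
      have hαE : α ∈ E := mem_of_maximal_of_aeval_eq_zero hE hord hirr hf hα
      have hroot : f.IsRoot ⟨α, hαE⟩ := by
        have h1 := Polynomial.aeval_algebraMap_apply Ω (⟨α, hαE⟩ : E) f
        have h2 : Polynomial.aeval (algebraMap E Ω ⟨α, hαE⟩) f = 0 := hα
        rw [h2] at h1
        exact (algebraMap E Ω).injective (by rw [map_zero, h1]; rfl)
      set r : E := ⟨α, hαE⟩
      obtain ⟨c, hc⟩ : ∃ c, f = (Polynomial.X - Polynomial.C r) * Polynomial.C c := by
        obtain ⟨q, hq⟩ := Polynomial.dvd_iff_isRoot.mpr hroot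
        rcases hirr.isUnit_or_isUnit hq with hu | hu
        · exact absurd hu (Polynomial.not_isUnit_X_sub_C r)
        · obtain ⟨c, -, rfl⟩ := Polynomial.isUnit_iff.mp hu
          exact ⟨c, hq⟩
      rw [hc] at hf
      simp only [Polynomial.eval_mul, Polynomial.eval_sub, Polynomial.eval_X,
        Polynomial.eval_C] at hf
      have hneg : (a - r) * (b - r) < 0 := by
        by_contra! hcon
        nlinarith [mul_nonneg hcon (sq_nonneg c)]
      refine ⟨r, ?_, ?_, hroot⟩
      · by_contra! hcon
        nlinarith
      · by_contra! hcon
        nlinarith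
    · rw [irreducible_iff] at hirr
      push Not at hirr
      obtain ⟨g, h, hgh, hg, hh⟩ := hirr hfu
      have hg0 : g ≠ 0 := by
        rintro rfl
        simp [hgh] at hf0
      have hh0 : h ≠ 0 := by
        rintro rfl
        simp [hgh] at hf0
      have hdeg := Polynomial.natDegree_mul hg0 hh0
      have hgd := (Polynomial.natDegree_pos_iff_degree_pos.mpr
        (Polynomial.degree_pos_of_ne_zero_of_nonunit hg0 hg))
      have hhd := (Polynomial.natDegree_pos_iff_degree_pos.mpr
        (Polynomial.degree_pos_of_ne_zero_of_nonunit hh0 hh))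
      rw [← hgh] at hdeg
      have hsign : g.eval a * g.eval b < 0 ∨ h.eval a * h.eval b < 0 := by
        by_contra! hcon
        rw [hgh, Polynomial.eval_mul, Polynomial.eval_mul] at hf
        nlinarith [mul_nonneg hcon.1 hcon.2]
      rcases hsign with hs | hs
      · obtain ⟨c, hac, hcb, hc⟩ := ih g.natDegree (by omega) g rfl hs
        exact ⟨c, hac, hcb, by rw [hgh, Polynomial.eval_mul, hc, zero_mul]⟩
      · obtain ⟨c, hac, hcb, hc⟩ := ih h.natDegree (by omega) h rfl hs
        exact ⟨c, hac, hcb, by rw [hgh, Polynomial.eval_mul, hc, mul_zero]⟩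

variable [IsStrictOrderedRing K]

theorem mul_mem_squareCone {E : IntermediateField K Ω} {x y : Ω} (hx : x ∈ E.squareCone)
    (hy : y ∈ E.squareCone) : x * y ∈ E.squareCone := by
  induction hx using AddSubmonoid.closure_induction with
  | mem x hx =>
    obtain ⟨p, hp, x, hx, rfl⟩ := hx
    induction hy using AddSubmonoid.closure_induction with
    | mem y hy =>
      obtain ⟨q, hq, y, hy, rfl⟩ := hy
      have := mul_sq_mem_squareCone (mul_nonneg hp hq) (mul_mem hx hy)
      rwa [map_mul, mul_pow, mul_mul_mul_comm] at this
    | zero => simp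
    | add y z _ _ hy hz => simpa [mul_add] using add_mem hy hz
  | zero => simp
  | add x z _ _ hx hz => simpa [add_mul] using add_mem hx hz

theorem neg_one_notMem_squareCone_bot : -1 ∉ (⊥ : IntermediateField K Ω).squareCone := by
  have key : ∀ x ∈ (⊥ : IntermediateField K Ω).squareCone, ∃ p : K, 0 ≤ p ∧ algebraMap K Ω p = x := by
    intro x hx
    induction hx using AddSubmonoid.closure_induction with
    | mem x hx =>
      obtain ⟨p, hp, x, hx, rfl⟩ := hx
      obtain ⟨q, rfl⟩ := mem_bot.mp hx
      exact ⟨p * q ^ 2, by positivity, by simp⟩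
    | zero => exact ⟨0, le_rfl, map_zero _⟩
    | add x y _ _ hx hy =>
      obtain ⟨p, hp, rfl⟩ := hx
      obtain ⟨q, hq, rfl⟩ := hy
      exact ⟨p + q, add_nonneg hp hq, map_add _ _ _⟩
  intro h
  obtain ⟨p, hp, h⟩ := key _ h
  rw [← map_one (algebraMap K Ω), ← map_neg] at h
  have := (algebraMap K Ω).injective h
  linarith

theorem exists_maximal_neg_one_notMem_squareCone (K Ω : Type*) [Field K] [LinearOrder K]
    [IsStrictOrderedRing K] [Field Ω] [Algebra K Ω] :
    ∃ E : IntermediateField K Ω, Maximal (fun E => -1 ∉ E.squareCone) E := by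
  obtain ⟨E, -, hE⟩ := zorn_le_nonempty₀ {E : IntermediateField K Ω | -1 ∉ E.squareCone} (by
    intro c hc hchain E₀ hE₀
    have hdir := hchain.directedOn
    have hne : c.Nonempty := ⟨E₀, hE₀⟩
    refine ⟨sSup c, fun hmem => ?_, fun z hz => le_sSup hz⟩
    have key : ∀ y ∈ (sSup c : IntermediateField K Ω).squareCone, ∃ E ∈ c, y ∈ E.squareCone := by
      intro y hy
      induction hy using AddSubmonoid.closure_induction with
      | mem y hy =>
        obtain ⟨p, hp, x, hx, rfl⟩ := hy
        have : Nonempty c := hne.to_subtype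
        rw [sSup_eq_iSup', ← SetLike.mem_coe, coe_iSup_of_directed hdir.directed_val] at hx
        obtain ⟨E, hx⟩ := Set.mem_iUnion.mp hx
        exact ⟨E, E.2, mul_sq_mem_squareCone hp hx⟩
      | zero => exact ⟨E₀, hE₀, zero_mem _⟩
      | add x y _ _ hx hy =>
        obtain ⟨E, hE, hx⟩ := hx
        obtain ⟨E', hE', hy⟩ := hy
        obtain ⟨E'', hE'', h, h'⟩ := hdir E hE E' hE'
        exact ⟨E'', hE'', add_mem (squareCone_mono h hx) (squareCone_mono h' hy)⟩
    obtain ⟨E, hE, h⟩ := key _ hmem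
    exact hc hE h) ⊥ neg_one_notMem_squareCone_bot
  exact ⟨E, hE⟩

/-- A compatible linear ordering of an intermediate field in whose cone `-1` does not lie. -/
theorem exists_linearOrder {E : IntermediateField K Ω} (hE : -1 ∉ E.squareCone) :
    ∃ _ : LinearOrder E, IsStrictOrderedRing E ∧ ∀ p : K, 0 ≤ p → 0 ≤ algebraMap K E p := by
  let T : Subsemiring E :=
    { carrier := {x | (x : Ω) ∈ E.squareCone}
      mul_mem' := fun hx hy => mul_mem_squareCone hx hy
      one_mem' := by simpa using mul_sq_mem_squareCone (E := E) zero_le_one (one_mem E)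
      add_mem' := fun hx hy => AddSubmonoid.add_mem E.squareCone hx hy
      zero_mem' := zero_mem E.squareCone }
  have hsq : ∀ x, x * x ∈ T := fun x => by
    have := mul_sq_mem_squareCone (E := E) zero_le_one x.2
    rwa [map_one, one_mul, sq] at this
  obtain ⟨_, hord, hT⟩ := Subsemiring.exists_linearOrder hsq (T := T) (by simpa [T] using hE)
  refine ⟨inferInstance, hord, fun p hp => hT _ ?_⟩
  change algebraMap K Ω p ∈ E.squareCone
  simpa using mul_sq_mem_squareCone (E := E) hp (one_mem E)

end IntermediateField

/-- Every ring ordering is induced by a homomorphism to an ordered field with the intermediate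
value property. -/
theorem RingPreordering.exists_polyIVT {A : Type} [CommRing A] (Q : RingPreordering A)
    [Q.IsOrdering] :
    ∃ (L : Type) (_ : Field L) (_ : LinearOrder L) (_ : IsStrictOrderedRing L) (φ : A →+* L),
      PolyIVT L ∧ (∀ a ∈ Q, 0 ≤ φ a) ∧ ∀ a, φ a = 0 → -a ∈ Q := by
  obtain ⟨K, _, _, _, ψ, hψ, hψ0⟩ := Q.exists_orderedField
  obtain ⟨E, hE⟩ :=
    IntermediateField.exists_maximal_neg_one_notMem_squareCone K (AlgebraicClosure K)
  obtain ⟨_, _, hord⟩ := IntermediateField.exists_linearOrder hE.1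
  exact ⟨E, inferInstance, inferInstance, inferInstance, (algebraMap K E).comp ψ,
    IntermediateField.polyIVT_of_maximal hE hord, fun a ha => hord _ (hψ a ha),
    fun a ha => hψ0 a ((map_eq_zero (algebraMap K E)).mp ha)⟩

end RealClosure

section Preorder

variable {n m : ℕ}

theorem isSOS_iff_isSumSq {p : MvPolynomial (Fin n) ℝ} : IsSOS p ↔ IsSumSq p := by
  constructor
  · rintro ⟨N, q, rfl⟩
    exact IsSumSq.sum fun i _ => (IsSquare.sq (q i)).isSumSq
  · intro hp
    induction hp using IsSumSq.rec' with
    | zero => exact ⟨0, Fin.elim0, by simp⟩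
    | sq_add hx _ ih =>
      obtain ⟨x, rfl⟩ := hx
      obtain ⟨N, q, rfl⟩ := ih
      exact ⟨N + 1, Fin.cons x q, by simp [Fin.sum_univ_succ, sq]⟩

theorem IsSOS.eval_nonneg {p : MvPolynomial (Fin n) ℝ} (hp : IsSOS p) (x : Fin n → ℝ) :
    0 ≤ eval x p := by
  obtain ⟨N, q, rfl⟩ := hp
  simp only [map_sum, map_pow]
  positivity

variable {b : Fin m → MvPolynomial (Fin n) ℝ}

theorem InPreorder.eval_nonneg {p : MvPolynomial (Fin n) ℝ} (hp : InPreorder b p)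
    {x : Fin n → ℝ} (hx : ∀ i, 0 ≤ eval x (b i)) : 0 ≤ eval x p := by
  obtain ⟨σ, hσ, rfl⟩ := hp
  simp only [map_sum, map_mul, map_prod]
  exact Finset.sum_nonneg fun J _ =>
    mul_nonneg ((hσ J).eval_nonneg x) (Finset.prod_nonneg fun i _ => hx i)

theorem inPreorder_mul_prod {σ : MvPolynomial (Fin n) ℝ} (hσ : IsSumSq σ) (J : Finset (Fin m)) :
    InPreorder b (σ * ∏ i ∈ J, b i) := by
  refine ⟨fun K => if K = J then σ else 0, fun K => isSOS_iff_isSumSq.mpr ?_, ?_⟩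
  · dsimp only
    split_ifs
    exacts [hσ, .zero]
  · simp

theorem InPreorder.add {p q : MvPolynomial (Fin n) ℝ} (hp : InPreorder b p)
    (hq : InPreorder b q) : InPreorder b (p + q) := by
  obtain ⟨σ, hσ, rfl⟩ := hp
  obtain ⟨τ, hτ, rfl⟩ := hq
  refine ⟨σ + τ, fun J => isSOS_iff_isSumSq.mpr ?_, ?_⟩
  · exact (isSOS_iff_isSumSq.mp (hσ J)).add (isSOS_iff_isSumSq.mp (hτ J))
  · simp [add_mul, Finset.sum_add_distrib]

theorem inPreorder_of_isSumSq {σ : MvPolynomial (Fin n) ℝ} (hσ : IsSumSq σ) : InPreorder b σ := by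
  simpa using inPreorder_mul_prod (b := b) hσ ∅

theorem inPreorder_sum {ι : Type*} (s : Finset ι) {p : ι → MvPolynomial (Fin n) ℝ}
    (hp : ∀ i ∈ s, InPreorder b (p i)) : InPreorder b (∑ i ∈ s, p i) :=
  Finset.sum_induction p (InPreorder b) (fun _ _ => InPreorder.add)
    (inPreorder_of_isSumSq .zero) hp

theorem InPreorder.mul {p q : MvPolynomial (Fin n) ℝ} (hp : InPreorder b p)
    (hq : InPreorder b q) : InPreorder b (p * q) := by
  obtain ⟨σ, hσ, rfl⟩ := hp
  obtain ⟨τ, hτ, rfl⟩ := hq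
  rw [Finset.sum_mul_sum]
  refine inPreorder_sum _ fun J _ => inPreorder_sum _ fun K _ => ?_
  have hprod : (∏ i ∈ J, b i) * ∏ i ∈ K, b i =
      (∏ i ∈ J ∩ K, b i) * (∏ i ∈ J ∩ K, b i) * ∏ i ∈ (J ∪ K) \ (J ∩ K), b i := by
    rw [← Finset.prod_union_inter,
      ← Finset.prod_sdiff (Finset.inter_subset_union (s := J) (t := K))]
    ring
  have hsos : IsSumSq (σ J * τ K * ((∏ i ∈ J ∩ K, b i) * ∏ i ∈ J ∩ K, b i)) :=
    ((isSOS_iff_isSumSq.mp (hσ J)).mul (isSOS_iff_isSumSq.mp (hτ K))).mul (.mul_self _)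
  convert inPreorder_mul_prod (b := b) hsos ((J ∪ K) \ (J ∩ K)) using 1
  rw [mul_mul_mul_comm, hprod]
  ring

theorem inPreorder_generator (i : Fin m) : InPreorder b (b i) := by
  simpa using inPreorder_mul_prod (b := b) .one {i}

/-- The subsemiring of polynomials `s - p * q` with `s` and `q` in the preorder of `b`. -/
def preorderSubNeg (b : Fin m → MvPolynomial (Fin n) ℝ) (p : MvPolynomial (Fin n) ℝ) :
    Subsemiring (MvPolynomial (Fin n) ℝ) where
  carrier := {x | ∃ s q, InPreorder b s ∧ InPreorder b q ∧ x = s - p * q}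
  mul_mem' := by
    rintro _ _ ⟨s, q, hs, hq, rfl⟩ ⟨s', q', hs', hq', rfl⟩
    have hp : InPreorder b (p * p) := inPreorder_of_isSumSq (.mul_self p)
    exact ⟨s * s' + p * p * (q * q'), s * q' + q * s',
      (hs.mul hs').add (hp.mul (hq.mul hq')), (hs.mul hq').add (hq.mul hs'), by ring⟩
  one_mem' := ⟨1, 0, inPreorder_of_isSumSq .one, inPreorder_of_isSumSq .zero, by ring⟩
  add_mem' := by
    rintro _ _ ⟨s, q, hs, hq, rfl⟩ ⟨s', q', hs', hq', rfl⟩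
    exact ⟨s + s', q + q', hs.add hs', hq.add hq', by ring⟩
  zero_mem' := ⟨0, 0, inPreorder_of_isSumSq .zero, inPreorder_of_isSumSq .zero, by ring⟩

/-- **Positivstellensatz**: a polynomial that is nonnegative wherever all the `b i` are
has an algebraic certificate. -/
theorem exists_certificate_of_nonneg {p : MvPolynomial (Fin n) ℝ}
    (h : ∀ x, (∀ i, 0 ≤ eval x (b i)) → 0 ≤ eval x p) :
    ∃ (k : ℕ) (q r : MvPolynomial (Fin n) ℝ), InPreorder b q ∧ InPreorder b r ∧
      q * p = p ^ (2 * k) + r := by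
  by_contra! hcon
  have hT : ∀ k : ℕ, -p ^ (2 * k) ∉ preorderSubNeg b p := by
    rintro k ⟨s, q, hs, hq, hk⟩
    exact hcon k q s hq hs (by linear_combination hk)
  obtain ⟨Q, hQ, hTQ, hpQ⟩ := Subsemiring.exists_isOrdering (T := preorderSubNeg b p)
    (fun x => ⟨x * x, 0, inPreorder_of_isSumSq (.mul_self x), inPreorder_of_isSumSq .zero,
      by ring⟩) hT
  have hnp : -p ∈ Q := hTQ _ ⟨0, 1, inPreorder_of_isSumSq .zero, inPreorder_of_isSumSq .one,
    by ring⟩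
  have hp : p ∉ Q := fun hmem => hpQ 1 (by simpa [sq] using mul_mem hnp hmem)
  obtain ⟨L, _, _, _, φ, hL, hφ, hφ0⟩ := Q.exists_polyIVT
  have heval : ∀ q : MvPolynomial (Fin n) ℝ, q.eval₂ (φ.comp C) (fun k => φ (X k)) = φ q := by
    intro q
    rw [← MvPolynomial.coe_eval₂Hom]
    exact congrArg (fun f : MvPolynomial (Fin n) ℝ →+* L => f q)
      (MvPolynomial.ringHom_ext (by simp) (by simp))
  have hsol : HasSolution (φ.comp C) b p := by
    refine ⟨fun k => φ (X k), fun i => ?_, ?_⟩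
    · rw [heval]
      exact hφ _ (hTQ _ ⟨b i, 0, inPreorder_generator i, inPreorder_of_isSumSq .zero, by ring⟩)
    · rw [heval]
      refine lt_of_le_of_ne ?_ fun h0 => hp ?_
      · simpa using hφ _ hnp
      · simpa using hφ0 (-p) (by rw [map_neg, h0, neg_zero])
  obtain ⟨x, hx, hpx⟩ := hsol.real hL
  exact hpx.not_ge (h x hx)

end Preorder

section AffineInput

variable {n nu : ℕ} (h : MvPolynomial (Fin n) ℝ) (f : Fin n → MvPolynomial (Fin n) ℝ)
  (g : Fin n → Fin nu → MvPolynomial (Fin n) ℝ) (x : Fin n → ℝ)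

theorem HdotFun_convexCombination (u v : Fin nu → ℝ) {a b : ℝ} (hab : a + b = 1) :
    HdotFun h f g x (a • u + b • v) = a * HdotFun h f g x u + b * HdotFun h f g x v := by
  simp only [HdotFun, HdotPoly, map_sum, map_mul, map_add, eval_C, Pi.add_apply, Pi.smul_apply,
    smul_eq_mul, Finset.mul_sum]
  rw [← Finset.sum_add_distrib]
  refine Finset.sum_congr rfl fun i _ => ?_
  have hsum : ∑ j, (a * u j + b * v j) * eval x (g i j) =
      a * ∑ j, u j * eval x (g i j) + b * ∑ j, v j * eval x (g i j) := by
    simp only [Finset.mul_sum, ← Finset.sum_add_distrib]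
    exact Finset.sum_congr rfl fun j _ => by ring
  rw [hsum]
  linear_combination (-eval x (pderiv i h) * eval x (f i)) * hab

theorem HdotFun_le_of_mem_convexHull {s : Set (Fin nu → ℝ)} {c : ℝ}
    (hs : ∀ u ∈ s, HdotFun h f g x u ≤ c) {u : Fin nu → ℝ} (hu : u ∈ convexHull ℝ s) :
    HdotFun h f g x u ≤ c := by
  refine convexHull_min (t := {u | HdotFun h f g x u ≤ c}) hs ?_ hu
  intro u hu v hv a b ha hb hab
  rw [Set.mem_ofPred_eq] at hu hv ⊢
  rw [HdotFun_convexCombination h f g x u v hab]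
  calc a * HdotFun h f g x u + b * HdotFun h f g x v ≤ a * c + b * c := by gcongr
    _ = c := by rw [← add_mul, hab, one_mul]

end AffineInput

theorem cbf_iff_psatz_certificate {n nu m : ℕ}
    (h : MvPolynomial (Fin n) ℝ)
    (f : Fin n → MvPolynomial (Fin n) ℝ) (g : Fin n → Fin nu → MvPolynomial (Fin n) ℝ)
    (uvert : Fin m → Fin nu → ℝ)
    (κh βminus : ℝ) (hκ : 0 < κh) (hβ : βminus < 0) :
    (∀ x : Fin n → ℝ, eval x h > βminus →
        ∃ u ∈ convexHull ℝ (Set.range uvert), HdotFun h f g x u > -κh * eval x h)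
    ↔ ∃ (kh : ℕ) (qh rh : MvPolynomial (Fin n) ℝ),
        InPreorder (fun i => -HdotPoly h f g (uvert i) - C κh * h) qh ∧
        InPreorder (fun i => -HdotPoly h f g (uvert i) - C κh * h) rh ∧
        qh * (C βminus - h) = (C βminus - h) ^ (2 * kh) + rh := by
  constructor
  · intro hcbf
    refine exists_certificate_of_nonneg fun x hx => ?_
    by_contra! hneg
    rw [map_sub, eval_C, sub_neg] at hneg
    obtain ⟨u, hu, hlt⟩ := hcbf x hneg
    refine hlt.not_ge (HdotFun_le_of_mem_convexHull h f g x ?_ hu)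
    rintro _ ⟨i, rfl⟩
    have := hx i
    simp only [map_sub, map_neg, map_mul, eval_C] at this
    rw [HdotFun]
    linarith
  · rintro ⟨k, q, r, hq, hr, heq⟩ x hx
    by_contra! hcon
    have hb : ∀ i, 0 ≤ eval x (-HdotPoly h f g (uvert i) - C κh * h) := by
      intro i
      have := hcon (uvert i) (subset_convexHull ℝ _ ⟨i, rfl⟩)
      rw [HdotFun] at this
      simp only [map_sub, map_neg, map_mul, eval_C]
      linarith
    have hq0 := hq.eval_nonneg hb
    have hr0 := hr.eval_nonneg hb
    have heq' := congrArg (eval x) heq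
    simp only [map_add, map_mul, map_pow, map_sub, eval_C] at heq'
    have hp : βminus - eval x h < 0 := sub_neg.mpr hx
    have hpow : 0 < (βminus - eval x h) ^ (2 * k) := by
      rw [pow_mul]
      exact pow_pos (sq_pos_of_ne_zero hp.ne) k
    nlinarith [mul_nonneg hq0 (neg_nonneg.mpr hp.le)]
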